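/- Let n ≥ 1 and n/(n+1) < p ≤ 1, let Ω ⊆ ℝⁿ be a bounded Lipschitz domain, and fix ψ as in the context. There is a finite constant C = C(p,n,Ω,ψ) such that every smooth function u : ℝⁿ → ℝ with compact support contained in Ω satisfies ∫_Ω ( |u(x)| / dist(x,∂Ω) )^p dx ≤ C · Σ_{j=1}^n ‖ sup_{t>0} |(∂_j u) * ψ_t| ‖_{L^p(ℝⁿ)}^p. -/

import Mathlib

open MeasureTheory Metric Set ENNReal NNReal

noncomputable section

/-- The partial derivative `∂_j φ` in the `j`-th coordinate direction. -/
def pderivIdx (n : ℕ) (j : Fin n) (φ : EuclideanSpace ℝ (Fin n) → ℝ)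
    (x : EuclideanSpace ℝ (Fin n)) : ℝ :=
  fderiv ℝ φ x (EuclideanSpace.single j 1)

/-- `sup_{t>0} |(∂_j u) * ψ_t|(x)`, the smooth maximal function of the partial
derivative of a differentiable function `u`, where `ψ_t(z) = t^{-n} ψ(z/t)`. -/
def convMax (n : ℕ) (ψ u : EuclideanSpace ℝ (Fin n) → ℝ) (j : Fin n)
    (x : EuclideanSpace ℝ (Fin n)) : ℝ≥0∞ :=
  ⨆ (t : {s : ℝ // 0 < s}),
    ENNReal.ofReal |∫ y, pderivIdx n j u y * ((t.1⁻¹) ^ n * ψ (t.1⁻¹ • (x - y)))|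

/-- `U` is a boundary neighbourhood of the domain `Ω ⊆ ℝ^{m+1}` in which, after an
isometric change of coordinates `A`, the boundary `U ∩ ∂Ω` is the graph of an
`L`-Lipschitz function `h` over the ball `B(0,δ) ⊆ ℝ^m`, and `U ∩ Ω` lies below this
graph. -/
def IsLipschitzGraphNbhd (m : ℕ) (L δ : ℝ)
    (Ω U : Set (EuclideanSpace ℝ (Fin (m + 1)))) : Prop :=
  ∃ (A : EuclideanSpace ℝ (Fin (m + 1)) ≃ᵢ EuclideanSpace ℝ (Fin (m + 1)))
    (h : EuclideanSpace ℝ (Fin m) → ℝ),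
    LipschitzOnWith (Real.toNNReal L) h (ball 0 δ) ∧
    A '' (U ∩ frontier Ω) =
      {q : EuclideanSpace ℝ (Fin (m + 1)) |
        ∃ y ∈ ball (0 : EuclideanSpace ℝ (Fin m)) δ,
          (∀ i : Fin m, q (Fin.castSucc i) = y i) ∧ q (Fin.last m) = h y} ∧
    ∀ q ∈ A '' (U ∩ Ω), ∃ y ∈ ball (0 : EuclideanSpace ℝ (Fin m)) δ,
      (∀ i : Fin m, q (Fin.castSucc i) = y i) ∧ q (Fin.last m) < h y

/-- `Ω` is a bounded Lipschitz domain in `ℝ^{m+1}`. -/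
def IsLipschitzDomain (m : ℕ) (Ω : Set (EuclideanSpace ℝ (Fin (m + 1)))) : Prop :=
  IsOpen Ω ∧ IsConnected Ω ∧ Bornology.IsBounded Ω ∧
    ∃ L δ : ℝ, 0 < L ∧ 0 < δ ∧
      ∀ z ∈ frontier Ω, ∃ U, IsOpen U ∧ z ∈ U ∧ IsLipschitzGraphNbhd m L δ Ω U

/-- Centred Hardy–Littlewood maximal function (normalised by `R^n`). -/
def hlMax (n : ℕ) (g : EuclideanSpace ℝ (Fin n) → ℝ≥0∞) (x : EuclideanSpace ℝ (Fin n)) : ℝ≥0∞ :=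
  ⨆ R : {s : ℝ // 0 < s}, (∫⁻ y in closedBall x R.1, g y) / ENNReal.ofReal (R.1 ^ n)

lemma vol_closedBall (n : ℕ) (x : EuclideanSpace ℝ (Fin n)) (r : ℝ) (hr : 0 ≤ r) :
    volume (closedBall x r) =
      ENNReal.ofReal (r ^ n) * volume (ball (0 : EuclideanSpace ℝ (Fin n)) 1) := by
  have := Measure.addHaar_closedBall (volume : Measure (EuclideanSpace ℝ (Fin n))) x hr
  simpa using this

lemma hl_weak (n : ℕ) (hn : n ≠ 0) (g : EuclideanSpace ℝ (Fin n) → ℝ≥0∞) (l : ℝ≥0∞)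
    (hl0 : l ≠ 0) (hlt : l ≠ ⊤) :
    l * volume {x | l < hlMax n g x} ≤
      (ENNReal.ofReal (4 ^ n) * volume (ball (0 : EuclideanSpace ℝ (Fin n)) 1)) * ∫⁻ y, g y := by
  set ω := volume (ball (0 : EuclideanSpace ℝ (Fin n)) 1) with hω
  have hω0 : ω ≠ 0 := (measure_ball_pos volume _ one_pos).ne'
  have hωt : ω ≠ ⊤ := measure_ball_lt_top.ne
  by_cases hI : ∫⁻ y, g y = ⊤
  · rw [hI, ENNReal.mul_top]
    · exact le_top
    · refine mul_ne_zero ?_ hω0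
      simp
  let t : Set (EuclideanSpace ℝ (Fin n) × ℝ) :=
    {a | 0 < a.2 ∧ l * ENNReal.ofReal (a.2 ^ n) < ∫⁻ y in closedBall a.1 a.2, g y}
  have hR : ∀ a ∈ t, a.2 ≤ max 1 ((∫⁻ y, g y) / l).toReal := by
    rintro ⟨x, r⟩ ⟨hr, h⟩
    dsimp only at hr h ⊢
    by_cases h1 : r ≤ 1
    · exact le_max_of_le_left h1
    push Not at h1
    apply le_max_of_le_right
    have h2 : ENNReal.ofReal (r ^ n) ≤ (∫⁻ y, g y) / l := by
      rw [ENNReal.le_div_iff_mul_le (Or.inl hl0) (Or.inl hlt), mul_comm]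
      exact h.le.trans (setLIntegral_le_lintegral _ _)
    have h3 : (∫⁻ y, g y) / l ≠ ⊤ := ENNReal.div_ne_top hI hl0
    have h4 := (ENNReal.ofReal_le_iff_le_toReal h3).1 h2
    exact (le_self_pow₀ h1.le hn).trans h4
  obtain ⟨v, hvt, hdis, hcov⟩ := Vitali.exists_disjoint_subfamily_covering_enlargement_closedBall
    t (fun a => a.1) (fun a => a.2) _ hR 4 (by norm_num)
  have hvc : v.Countable := by
    apply hdis.countable_of_nonempty_interior
    intro a ha
    have := (hvt ha).1
    exact ⟨a.1, ball_subset_interior_closedBall (mem_ball_self this)⟩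
  have hsub : {x | l < hlMax n g x} ⊆ ⋃ a ∈ v, closedBall a.1 (4 * a.2) := by
    intro x hx
    simp only [mem_ofPred_eq, hlMax, lt_iSup_iff] at hx
    obtain ⟨⟨R, hRp⟩, hx⟩ := hx
    have hxt : (x, R) ∈ t := by
      refine ⟨hRp, ?_⟩
      have hne : ENNReal.ofReal (R ^ n) ≠ 0 := by
        simp only [ne_eq, ENNReal.ofReal_eq_zero, not_le]; positivity
      rw [ENNReal.lt_div_iff_mul_lt (Or.inl hne) (Or.inl ENNReal.ofReal_ne_top)] at hx
      exact hx
    obtain ⟨b, hb, hsb⟩ := hcov _ hxt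
    exact mem_biUnion hb (hsb (mem_closedBall_self hRp.le))
  calc l * volume {x | l < hlMax n g x}
      ≤ l * ∑' a : v, volume (closedBall a.1.1 (4 * a.1.2)) := by
        gcongr
        exact (measure_mono hsub).trans (measure_biUnion_le _ hvc _)
    _ = ∑' a : v, l * volume (closedBall a.1.1 (4 * a.1.2)) := ENNReal.tsum_mul_left.symm
    _ ≤ ∑' a : v, (ENNReal.ofReal (4 ^ n) * ω) * ∫⁻ y in closedBall a.1.1 a.1.2, g y := by
        refine ENNReal.tsum_le_tsum fun a => ?_
        have ha := hvt a.2
        rw [vol_closedBall _ _ _ (by linarith [ha.1]), mul_pow,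
          ENNReal.ofReal_mul (by positivity)]
        calc l * (ENNReal.ofReal (4 ^ n) * ENNReal.ofReal (a.1.2 ^ n) * ω)
            = (ENNReal.ofReal (4 ^ n) * ω) * (l * ENNReal.ofReal (a.1.2 ^ n)) := by ring
          _ ≤ _ := by gcongr; exact ha.2.le
    _ = (ENNReal.ofReal (4 ^ n) * ω) * ∑' a : v, ∫⁻ y in closedBall a.1.1 a.1.2, g y :=
        ENNReal.tsum_mul_left
    _ ≤ _ := by
        gcongr
        rw [← lintegral_biUnion hvc (fun a _ => measurableSet_closedBall) hdis]
        exact setLIntegral_le_lintegral _ _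

lemma two_zpow_ne (k : ℤ) : (2 : ℝ≥0∞) ^ k ≠ 0 ∧ (2 : ℝ≥0∞) ^ k ≠ ⊤ :=
  ⟨(ENNReal.zpow_pos (by norm_num) (by norm_num) k).ne',
    (ENNReal.zpow_lt_top (by norm_num) (by norm_num) k).ne⟩

lemma exists_zpow_between (X : ℝ≥0∞) (h0 : X ≠ 0) (ht : X ≠ ⊤) :
    ∃ k : ℤ, (2 : ℝ≥0∞) ^ k < X ∧ X ≤ (2 : ℝ≥0∞) ^ (k + 1) := by
  obtain ⟨k, hk⟩ := ENNReal.exists_mem_Ioc_zpow h0 ht (y := 2) (by norm_num) (by norm_num)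
  exact ⟨k, hk.1, hk.2⟩

lemma dyadic_upper (X : ℝ≥0∞) (r : ℝ) (hr : 0 < r) :
    X ^ r ≤ ∑' k : ℤ, if (2 : ℝ≥0∞) ^ k < X then ((2 : ℝ≥0∞) ^ (k + 1)) ^ r else 0 := by
  by_cases h0 : X = 0
  · simp [h0, ENNReal.zero_rpow_of_pos hr]
  by_cases ht : X = ⊤
  · subst ht
    have hinj : Function.Injective (fun i : ℕ => (i : ℤ)) := Nat.cast_injective
    refine le_trans ?_ (ENNReal.tsum_comp_le_tsum_of_injective hinj _)
    have : ∑' _ : ℕ, (1 : ℝ≥0∞) = ⊤ := ENNReal.tsum_const_eq_top_of_ne_zero one_ne_zero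
    rw [ENNReal.top_rpow_of_pos hr]
    refine this.symm.le.trans ?_
    refine ENNReal.tsum_le_tsum fun i => ?_
    rw [if_pos (two_zpow_ne _).2.lt_top]
    apply ENNReal.one_le_rpow _ hr
    have := ENNReal.zpow_le_of_le (x := 2) (by norm_num) (a := 0) (b := (i : ℤ) + 1) (by omega)
    simpa using this
  obtain ⟨k, h1, h2⟩ := exists_zpow_between X h0 ht
  refine le_trans ?_ (ENNReal.le_tsum k)
  rw [if_pos h1]
  gcongr

lemma dyadic_lower (r : ℝ) (hr : 0 < r) : ∃ C : ℝ≥0∞, C ≠ 0 ∧ C ≠ ⊤ ∧ ∀ Y : ℝ≥0∞,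
    ∑' k : ℤ, (if (2 : ℝ≥0∞) ^ k < Y then ((2 : ℝ≥0∞) ^ k) ^ r else 0) ≤ C * Y ^ r := by
  set b : ℝ≥0∞ := (2 : ℝ≥0∞) ^ (-r) with hb
  have hb1 : b < 1 := by
    rw [hb]; exact ENNReal.rpow_lt_one_of_one_lt_of_neg (by norm_num) (by linarith)
  have hgeo : ∑' i : ℕ, b ^ i = (1 - b)⁻¹ := ENNReal.tsum_geometric b
  have hC0 : (1 - b)⁻¹ ≠ 0 := ENNReal.inv_ne_zero.2 (ne_top_of_le_ne_top one_ne_top tsub_le_self)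
  refine ⟨(1 - b)⁻¹, hC0, ?_, ?_⟩
  · exact ENNReal.inv_ne_top.2 (tsub_pos_of_lt hb1).ne'
  intro Y
  by_cases h0 : Y = 0
  · simp [h0]
  by_cases ht : Y = ⊤
  · rw [ht, ENNReal.top_rpow_of_pos hr, ENNReal.mul_top hC0]; exact le_top
  obtain ⟨k, h1, h2⟩ := exists_zpow_between Y h0 ht
  have hinj : Function.Injective (fun i : ℕ => k - (i : ℤ)) := by
    intro i j h; simpa using h
  rw [← hinj.tsum_eq]
  · calc _ ≤ ∑' i : ℕ, b ^ i * Y ^ r := by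
          refine ENNReal.tsum_le_tsum fun i => ?_
          split_ifs
          · have e : (2 : ℝ≥0∞) ^ (k - (i : ℤ)) = (2 : ℝ≥0∞) ^ k * ((2 : ℝ≥0∞) ^ i)⁻¹ := by
              rw [ENNReal.zpow_sub (by norm_num) (by norm_num), zpow_natCast]
            rw [e, ENNReal.mul_rpow_of_nonneg _ _ hr.le, mul_comm]
            gcongr
            rw [hb, ← ENNReal.rpow_natCast, ← ENNReal.rpow_natCast, ← ENNReal.rpow_neg,
              ← ENNReal.rpow_mul, ← ENNReal.rpow_mul]
            apply le_of_eq; congr 1; ring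
          · exact zero_le
    _ = _ := by rw [ENNReal.tsum_mul_right, hgeo]
  · intro j hj
    simp only [Function.mem_support, ne_eq, ite_eq_right_iff, Classical.not_imp] at hj
    have : j < k + 1 := by
      by_contra hcon
      push Not at hcon
      have := hj.1.trans_le h2
      exact absurd (ENNReal.zpow_le_of_le (by norm_num) hcon) (not_le.2 this)
    exact ⟨(k - j).toNat, by simp; omega⟩

lemma hl_trunc (n : ℕ) (g : EuclideanSpace ℝ (Fin n) → ℝ≥0∞) (l : ℝ≥0∞)
    (x : EuclideanSpace ℝ (Fin n)) :
    hlMax n g x ≤ hlMax n (fun y => if l < g y then g y else 0) x +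
      l * volume (ball (0 : EuclideanSpace ℝ (Fin n)) 1) := by
  refine iSup_le fun R => ?_
  have hne : ENNReal.ofReal (R.1 ^ n) ≠ 0 := by
    have := R.2
    simp only [ne_eq, ENNReal.ofReal_eq_zero, not_le]; positivity
  refine le_trans ?_ (add_le_add_left (le_iSup _ R) _)
  rw [ENNReal.div_le_iff_le_mul (Or.inl hne) (Or.inl ENNReal.ofReal_ne_top), add_mul,
    ENNReal.div_mul_cancel hne ENNReal.ofReal_ne_top]
  have hc : l * volume (ball (0 : EuclideanSpace ℝ (Fin n)) 1) * ENNReal.ofReal (R.1 ^ n)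
      = ∫⁻ y in closedBall x R.1, l := by
    rw [setLIntegral_const, vol_closedBall _ _ _ R.2.le]; ring
  rw [hc, ← lintegral_add_right _ measurable_const]
  refine lintegral_mono fun y => ?_
  dsimp only
  split_ifs with h
  · exact le_self_add
  · rw [zero_add]; exact not_lt.1 h

lemma hl_strong (n : ℕ) (hn : n ≠ 0) (r : ℝ) (hr : 1 < r) :
    ∃ C : ℝ≥0∞, C ≠ ⊤ ∧ ∀ g : EuclideanSpace ℝ (Fin n) → ℝ≥0∞, Measurable g →
      ∃ G : EuclideanSpace ℝ (Fin n) → ℝ≥0∞, Measurable G ∧ (∀ x, hlMax n g x ^ r ≤ G x) ∧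
        ∫⁻ x, G x ≤ C * ∫⁻ x, g x ^ r := by
  set ω := volume (ball (0 : EuclideanSpace ℝ (Fin n)) 1) with hω
  have hω0 : ω ≠ 0 := (measure_ball_pos volume _ one_pos).ne'
  have hωt : ω ≠ ⊤ := measure_ball_lt_top.ne
  obtain ⟨C₀, hC0, hCt, hC⟩ := dyadic_lower (r - 1) (by linarith)
  set A := ENNReal.ofReal (4 ^ n) * ω with hA
  have hAt : A ≠ ⊤ := ENNReal.mul_ne_top ENNReal.ofReal_ne_top hωt
  set D : ℝ≥0∞ := (2 : ℝ≥0∞) ^ r * 2 * A with hD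
  have hDt : D ≠ ⊤ := ENNReal.mul_ne_top (ENNReal.mul_ne_top
    (ENNReal.rpow_ne_top_of_nonneg (by linarith) (by norm_num)) (by norm_num)) hAt
  have h2ω : (2 * ω) ^ (r - 1) ≠ ⊤ := ENNReal.rpow_ne_top_of_nonneg (by linarith)
    (ENNReal.mul_ne_top (by norm_num) hωt)
  refine ⟨D * (C₀ * (2 * ω) ^ (r - 1)), ENNReal.mul_ne_top hDt (ENNReal.mul_ne_top hCt h2ω), ?_⟩
  intro g hg
  let S : ℤ → Set (EuclideanSpace ℝ (Fin n)) :=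
    fun k => toMeasurable volume {x | (2 : ℝ≥0∞) ^ k < hlMax n g x}
  have hSm : ∀ k, MeasurableSet (S k) := fun k => measurableSet_toMeasurable _ _
  have hmeas : ∀ k : ℤ, Measurable ((S k).indicator
      (fun _ : EuclideanSpace ℝ (Fin n) => ((2 : ℝ≥0∞) ^ (k + 1)) ^ r)) :=
    fun k => measurable_const.indicator (hSm k)
  have hset : ∀ k : ℤ, MeasurableSet {x | (2 : ℝ≥0∞) ^ k < 2 * ω * g x} := fun k =>
    measurableSet_lt measurable_const (hg.const_mul _)
  refine ⟨fun x => ∑' k : ℤ, (S k).indicator (fun _ => ((2 : ℝ≥0∞) ^ (k + 1)) ^ r) x,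
    Measurable.tsum hmeas, ?_, ?_⟩
  · intro x
    refine (dyadic_upper _ r (by linarith)).trans (ENNReal.tsum_le_tsum fun k => ?_)
    split_ifs with h
    · have : x ∈ S k := subset_toMeasurable _ _ h
      rw [indicator_of_mem this]
    · exact zero_le
  rw [lintegral_tsum (fun k => (hmeas k).aemeasurable)]
  have key : ∀ k : ℤ, ∫⁻ x, (S k).indicator (fun _ => ((2 : ℝ≥0∞) ^ (k + 1)) ^ r) x ≤
      ∫⁻ x, D * (g x * (if (2 : ℝ≥0∞) ^ k < 2 * ω * g x then ((2 : ℝ≥0∞) ^ k) ^ (r - 1) else 0)) := by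
    intro k
    set l := (2 : ℝ≥0∞) ^ k with hl
    obtain ⟨hl0, hlt⟩ := two_zpow_ne k
    have hd : l * (2 * ω)⁻¹ * ω = l / 2 := by
      rw [ENNReal.mul_inv (Or.inl (by norm_num)) (Or.inl (by norm_num)), div_eq_mul_inv, mul_assoc,
        mul_assoc, ENNReal.inv_mul_cancel hω0 hωt, mul_one]
    have hiff : ∀ y, l * (2 * ω)⁻¹ < g y ↔ l < 2 * ω * g y := by
      intro y
      rw [← div_eq_mul_inv, ENNReal.div_lt_iff (Or.inl (by simp [hω0]))
        (Or.inl (ENNReal.mul_ne_top (by norm_num) hωt)), mul_comm (g y)]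
    have hsub : {x | l < hlMax n g x} ⊆
        {x | l / 2 < hlMax n (fun y => if l < 2 * ω * g y then g y else 0) x} := by
      intro x hx
      by_contra hcon
      have h1 : hlMax n (fun y => if l < 2 * ω * g y then g y else 0) x ≤ l / 2 := not_lt.1 hcon
      have h2 := hl_trunc n g (l * (2 * ω)⁻¹) x
      rw [hd] at h2
      simp only [hiff] at h2
      have h3 := h2.trans (add_le_add_left h1 _)
      rw [ENNReal.add_halves] at h3
      exact absurd h3 (not_le.2 hx)
    have hw := hl_weak n hn (fun y => if l < 2 * ω * g y then g y else 0) (l / 2)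
      (by simpa using hl0) (ENNReal.div_ne_top hlt (by norm_num))
    rw [lintegral_indicator_const (hSm k), measure_toMeasurable]
    have hl1 : (2 : ℝ≥0∞) ^ (k + 1) = l * 2 := by
      rw [ENNReal.zpow_add (by norm_num) (by norm_num), zpow_one]
    have hl2 : l ^ r = l ^ (r - 1) * l := by
      conv_lhs => rw [show r = (r - 1) + 1 by ring]
      rw [ENNReal.rpow_add _ _ hl0 hlt, ENNReal.rpow_one]
    have hl3 : l = 2 * (l / 2) := (ENNReal.mul_div_cancel (by norm_num) (by norm_num)).symm
    calc ((2 : ℝ≥0∞) ^ (k + 1)) ^ r * volume {x | l < hlMax n g x}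
        ≤ ((2 : ℝ≥0∞) ^ (k + 1)) ^ r *
          volume {x | l / 2 < hlMax n (fun y => if l < 2 * ω * g y then g y else 0) x} := by
          gcongr
      _ = (2 : ℝ≥0∞) ^ r * 2 * l ^ (r - 1) * (l / 2 *
          volume {x | l / 2 < hlMax n (fun y => if l < 2 * ω * g y then g y else 0) x}) := by
          rw [hl1, ENNReal.mul_rpow_of_nonneg _ _ (by linarith), hl2]
          nth_rewrite 2 [hl3]
          ring
      _ ≤ (2 : ℝ≥0∞) ^ r * 2 * l ^ (r - 1) *
          (A * ∫⁻ y, (if l < 2 * ω * g y then g y else 0)) := by gcongr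
      _ = D * (l ^ (r - 1) * ∫⁻ y, (if l < 2 * ω * g y then g y else 0)) := by
          rw [hD]; ring
      _ = _ := by
          have hm1 : Measurable (fun y => if l < 2 * ω * g y then g y else 0) :=
            Measurable.ite (hset k) hg measurable_const
          have hm2 : Measurable (fun y => l ^ (r - 1) * if l < 2 * ω * g y then g y else 0) :=
            hm1.const_mul _
          rw [← lintegral_const_mul _ hm1, ← lintegral_const_mul _ hm2]
          congr 1; ext y
          split_ifs <;> ring
  refine (ENNReal.tsum_le_tsum key).trans ?_
  have hm3 : ∀ k : ℤ, Measurable (fun x => D * (g x *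
      (if (2 : ℝ≥0∞) ^ k < 2 * ω * g x then ((2 : ℝ≥0∞) ^ k) ^ (r - 1) else 0))) := fun k =>
    (hg.mul (Measurable.ite (hset k) measurable_const measurable_const)).const_mul _
  rw [← lintegral_tsum (fun k => (hm3 k).aemeasurable), ← lintegral_const_mul _ (hg.pow_const _)]
  refine lintegral_mono fun x => ?_
  dsimp only
  rw [ENNReal.tsum_mul_left, ENNReal.tsum_mul_left, mul_assoc D]
  refine mul_le_mul_right ?_ D
  refine (mul_le_mul_right (hC (2 * ω * g x)) _).trans ?_
  rw [ENNReal.mul_rpow_of_nonneg _ _ (by linarith)]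
  have : g x * g x ^ (r - 1) = g x ^ r := by
    by_cases h0 : g x = 0
    · simp [h0, ENNReal.zero_rpow_of_pos (by linarith : 0 < r)]
    by_cases ht : g x = ⊤
    · rw [ht, ENNReal.top_rpow_of_pos (by linarith), ENNReal.top_rpow_of_pos (by linarith)]; simp
    conv_rhs => rw [show r = 1 + (r - 1) by ring]
    rw [ENNReal.rpow_add _ _ h0 ht, ENNReal.rpow_one]
  rw [← this]
  apply le_of_eq; ring
lemma corkscrew_graph (m : ℕ) (L δ : ℝ) (hL : 0 < L)
    (Ω U : Set (EuclideanSpace ℝ (Fin (m + 1)))) (hU : IsLipschitzGraphNbhd m L δ Ω U)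
    (z : EuclideanSpace ℝ (Fin (m + 1))) (hz : z ∈ frontier Ω) (ε : ℝ) (hε : ball z ε ⊆ U)
    (hε0 : 0 < ε) (ρ : ℝ) (hρ : 0 < ρ) (hρε : 2 * ρ < ε) :
    ∃ w, dist z w = ρ ∧ ∀ v, dist v w < (1 + L)⁻¹ * ρ → v ∉ Ω := by
  obtain ⟨A, h, hh, hgr, hbelow⟩ := hU
  have hzU : z ∈ U := hε (mem_ball_self hε0)
  have hAz : A z ∈ A '' (U ∩ frontier Ω) := ⟨z, ⟨hzU, hz⟩, rfl⟩
  rw [hgr] at hAz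
  obtain ⟨y, hy, hyi, hyl⟩ := hAz
  set e : EuclideanSpace ℝ (Fin (m + 1)) := EuclideanSpace.single (Fin.last m) ρ with he
  have heρ : ‖e‖ = ρ := by rw [he, EuclideanSpace.norm_single, Real.norm_of_nonneg hρ.le]
  set w := A.symm (A z + e) with hw
  have hAw : A w = A z + e := A.apply_symm_apply _
  refine ⟨w, ?_, ?_⟩
  · rw [← A.isometry.dist_eq, hAw, dist_self_add_right, heρ]
  intro v hv hvΩ
  have hκ : (1 + L)⁻¹ ≤ 1 := inv_le_one_of_one_le₀ (by linarith)
  have hvU : v ∈ U := by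
    apply hε
    rw [mem_ball]
    have h1 : dist z w = ρ := by rw [← A.isometry.dist_eq, hAw, dist_self_add_right, heρ]
    calc dist v z ≤ dist v w + dist w z := dist_triangle _ _ _
      _ < (1 + L)⁻¹ * ρ + ρ := by rw [dist_comm w z, h1]; linarith
      _ ≤ 2 * ρ := by nlinarith
      _ < ε := hρε
  obtain ⟨y', hy', hyi', hyl'⟩ := hbelow (A v) ⟨v, ⟨hvU, hvΩ⟩, rfl⟩
  rw [← A.isometry.dist_eq, hAw] at hv
  set D := dist (A v) (A z + e) with hD
  have hsq : D ^ 2 = ∑ i, (A v i - (A z + e) i) ^ 2 := by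
    rw [hD, EuclideanSpace.dist_eq, Real.sq_sqrt (by positivity)]
    simp [Real.dist_eq, sq_abs]
  rw [Fin.sum_univ_castSucc] at hsq
  have hlast : (A z + e) (Fin.last m) = h y + ρ := by
    simp [he, hyl]
  have hcs : ∀ i : Fin m, (A z + e) (Fin.castSucc i) = y i := by
    intro i
    simp [he, hyi, (Fin.castSucc_lt_last i).ne]
  simp only [hlast, hcs, hyi'] at hsq
  have hd0 : dist y' y ^ 2 = ∑ i, (y' i - y i) ^ 2 := by
    rw [EuclideanSpace.dist_eq, Real.sq_sqrt (by positivity)]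
    simp [Real.dist_eq, sq_abs]
  rw [← hd0] at hsq
  have hD0 : 0 ≤ D := dist_nonneg
  have h1 : dist y' y ≤ D := by
    apply abs_le_of_sq_le_sq' _ hD0 |>.2
    nlinarith [sq_nonneg (A v (Fin.last m) - (h y + ρ))]
  have h2 : -D ≤ A v (Fin.last m) - (h y + ρ) := by
    apply abs_le_of_sq_le_sq' _ hD0 |>.1
    nlinarith [sq_nonneg (dist y' y)]
  have h3 := hh.dist_le_mul y' hy' y hy
  rw [Real.dist_eq, Real.coe_toNNReal _ hL.le] at h3
  have h4 := (abs_le.1 h3).2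
  have h5 : (1 + L) * D < ρ := by
    rw [inv_mul_eq_div, lt_div_iff₀ (by linarith)] at hv
    linarith
  nlinarith

lemma corkscrew (m : ℕ) (Ω : Set (EuclideanSpace ℝ (Fin (m + 1)))) (hΩ : IsLipschitzDomain m Ω) :
    ∃ c : ℝ, 0 < c ∧ ∀ x ∈ Ω, 0 < infDist x (frontier Ω) ∧
      ∃ w, dist x w ≤ 2 * infDist x (frontier Ω) ∧
        ∀ v, dist v w < c * infDist x (frontier Ω) → v ∉ Ω := by
  obtain ⟨hopen, hconn, hbdd, L, δ, hL, hδ, hloc⟩ := hΩ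
  have hfr_ne : (frontier Ω).Nonempty := by
    rw [nonempty_frontier_iff]
    refine ⟨hconn.nonempty, ?_⟩
    rintro rfl
    exact NormedSpace.unbounded_univ ℝ (EuclideanSpace ℝ (Fin (m + 1))) hbdd
  have hclos : IsCompact (closure Ω) := hbdd.isCompact_closure
  have hfc : IsCompact (frontier Ω) := hclos.of_isClosed_subset isClosed_frontier
    frontier_subset_closure
  obtain ⟨ε, hε, hleb⟩ := lebesgue_number_lemma_of_metric_sUnion
    (c := {U | IsOpen U ∧ IsLipschitzGraphNbhd m L δ Ω U}) hfc (fun U hU => hU.1) (by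
      intro z hz
      obtain ⟨U, h1, h2, h3⟩ := hloc z hz
      exact ⟨U, ⟨h1, h3⟩, h2⟩)
  obtain ⟨D, hD⟩ := hclos.isBounded.exists_pos_norm_le
  obtain ⟨hD0, hD⟩ := hD
  set lam := min 1 (ε / (6 * D)) with hlam
  have hlam0 : 0 < lam := by positivity
  have hlam1 : lam ≤ 1 := min_le_left _ _
  refine ⟨(1 + L)⁻¹ * lam, by positivity, ?_⟩
  intro x hx
  have hxf : x ∉ frontier Ω := by
    intro h
    exact (hopen.frontier_eq ▸ h : x ∈ closure Ω \ Ω).2 hx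
  have hd : 0 < infDist x (frontier Ω) :=
    (isClosed_frontier.notMem_iff_infDist_pos hfr_ne).1 hxf
  refine ⟨hd, ?_⟩
  obtain ⟨z, hz, hxz⟩ := hfc.exists_infDist_eq_dist hfr_ne x
  set d := infDist x (frontier Ω) with hdd
  obtain ⟨U, ⟨hUo, hU⟩, hball⟩ := hleb z hz
  have hd2 : d ≤ 2 * D := by
    rw [hxz, dist_eq_norm]
    have := norm_sub_le x z
    linarith [hD x (subset_closure hx), hD z (frontier_subset_closure hz)]
  obtain ⟨w, hw1, hw2⟩ := corkscrew_graph m L δ hL Ω U hU z hz ε hball hε (lam * d)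
    (by positivity) (by
      have : lam ≤ ε / (6 * D) := min_le_right _ _
      rw [le_div_iff₀ (by positivity)] at this
      nlinarith)
  refine ⟨w, ?_, ?_⟩
  · have := dist_triangle x z w
    rw [hw1, ← hxz] at this
    nlinarith
  · intro v hv
    apply hw2
    rw [← mul_assoc]; exact hv
/-- Convolution on `ℝⁿ`. -/
def cv (n : ℕ) (f g : EuclideanSpace ℝ (Fin n) → ℝ) (x : EuclideanSpace ℝ (Fin n)) : ℝ :=
  ∫ y, f y * g (x - y)

/-- Continuous with compact support. -/
def CC (n : ℕ) (f : EuclideanSpace ℝ (Fin n) → ℝ) : Prop := Continuous f ∧ HasCompactSupport f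

/-- The dilation `ψ_t`. -/
def psiT (n : ℕ) (ψ : EuclideanSpace ℝ (Fin n) → ℝ) (t : ℝ) (x : EuclideanSpace ℝ (Fin n)) : ℝ :=
  (t⁻¹) ^ n * ψ (t⁻¹ • x)

lemma cv_eq (n : ℕ) (f g : EuclideanSpace ℝ (Fin n) → ℝ) :
    cv n f g = MeasureTheory.convolution f g (ContinuousLinearMap.mul ℝ ℝ) volume := rfl

lemma cv_swap (n : ℕ) (f g : EuclideanSpace ℝ (Fin n) → ℝ) (x : EuclideanSpace ℝ (Fin n)) :
    cv n f g x = ∫ y, f (x - y) * g y := by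
  rw [cv_eq, convolution_mul_swap]

lemma cv_comm (n : ℕ) (f g : EuclideanSpace ℝ (Fin n) → ℝ) : cv n f g = cv n g f := by
  ext x
  rw [cv_swap]
  simp only [cv, mul_comm]

lemma CC.integrable {n : ℕ} {f : EuclideanSpace ℝ (Fin n) → ℝ} (hf : CC n f) : Integrable f :=
  hf.1.integrable_of_hasCompactSupport hf.2

lemma CC.abs {n : ℕ} {f : EuclideanSpace ℝ (Fin n) → ℝ} (hf : CC n f) :
    CC n (fun x => ‖f x‖) := ⟨hf.1.norm, hf.2.norm⟩

lemma CC.cv {n : ℕ} {f g : EuclideanSpace ℝ (Fin n) → ℝ} (hf : CC n f) (hg : CC n g) :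
    CC n (cv n f g) := by
  rw [cv_eq]
  exact ⟨hg.2.continuous_convolution_right _ hf.1.locallyIntegrable hg.1,
    hf.2.convolution _ hg.2⟩

lemma CC.add {n : ℕ} {f g : EuclideanSpace ℝ (Fin n) → ℝ} (hf : CC n f) (hg : CC n g) :
    CC n (fun x => f x + g x) := ⟨hf.1.add hg.1, hf.2.add hg.2⟩

lemma CC.sub {n : ℕ} {f g : EuclideanSpace ℝ (Fin n) → ℝ} (hf : CC n f) (hg : CC n g) :
    CC n (fun x => f x - g x) := ⟨hf.1.sub hg.1, hf.2.sub hg.2⟩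

lemma CC.exists {n : ℕ} {f g : EuclideanSpace ℝ (Fin n) → ℝ} (hf : CC n f) (hg : CC n g) :
    ConvolutionExists f g (ContinuousLinearMap.mul ℝ ℝ) volume :=
  hg.2.convolutionExists_right _ hf.1.locallyIntegrable hg.1

lemma CC.int {n : ℕ} {f g : EuclideanSpace ℝ (Fin n) → ℝ} (hf : CC n f) (hg : CC n g)
    (x : EuclideanSpace ℝ (Fin n)) : Integrable (fun y => f y * g (x - y)) := hf.exists hg x

lemma CC.int' {n : ℕ} {f g : EuclideanSpace ℝ (Fin n) → ℝ} (hf : CC n f) (hg : CC n g)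
    (x : EuclideanSpace ℝ (Fin n)) : Integrable (fun y => f (x - y) * g y) := by
  have := hg.int hf x
  simpa only [mul_comm] using this

lemma CC.bdd {n : ℕ} {f : EuclideanSpace ℝ (Fin n) → ℝ} (hf : CC n f) :
    ∃ S : ℝ, 0 ≤ S ∧ ∀ x, |f x| ≤ S := by
  obtain ⟨S, hS⟩ := hf.1.bounded_above_of_compact_support hf.2
  exact ⟨S, (norm_nonneg _).trans (hS 0), hS⟩

lemma cv_assoc {n : ℕ} {f g k : EuclideanSpace ℝ (Fin n) → ℝ} (hf : CC n f) (hg : CC n g)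
    (hk : CC n k) : cv n (cv n f g) k = cv n f (cv n g k) := by
  ext x
  simp only [cv_eq]
  apply convolution_assoc
  · intro a b c; simp [mul_assoc]
  · exact hf.1.aestronglyMeasurable
  · exact hg.1.aestronglyMeasurable
  · exact hk.1.aestronglyMeasurable
  · exact Filter.Eventually.of_forall (hf.exists hg)
  · exact Filter.Eventually.of_forall (hg.abs.exists hk.abs)
  · exact hf.abs.exists (hg.abs.cv hk.abs) x

lemma cv_sub_right {n : ℕ} {f g k : EuclideanSpace ℝ (Fin n) → ℝ} (hf : CC n f) (hg : CC n g)
    (hk : CC n k) (x : EuclideanSpace ℝ (Fin n)) :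
    cv n f (fun y => g y - k y) x = cv n f g x - cv n f k x := by
  simp only [cv, mul_sub]
  exact integral_sub (hf.int hg x) (hf.int hk x)

/-- Comparison of a convolution with a pointwise value. -/
lemma cv_diff {n : ℕ} {w g : EuclideanSpace ℝ (Fin n) → ℝ} (hw : CC n w) (hg : CC n g)
    (x : EuclideanSpace ℝ (Fin n)) (s d : ℝ) (hs : ∀ y, s ≤ ‖y‖ → g y = 0)
    (hd : ∀ y, ‖y - x‖ < s → |w y - w x| ≤ d) :
    |cv n w g x - (∫ y, g y) * w x| ≤ d * ∫ y, |g y| := by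
  rw [cv_swap, ← integral_mul_const, ← integral_sub (hw.int' hg x) (hg.integrable.mul_const _),
    ← integral_const_mul, ← Real.norm_eq_abs]
  refine norm_integral_le_of_norm_le (hg.abs.integrable.const_mul d) ?_
  refine Filter.Eventually.of_forall fun y => ?_
  by_cases hy : s ≤ ‖y‖
  · simp [hs y hy]
  · push Not at hy
    have h1 := hd (x - y) (by simpa using hy)
    have : w (x - y) * g y - g y * w x = (w (x - y) - w x) * g y := by ring
    rw [this, norm_mul]
    exact mul_le_mul_of_nonneg_right h1 (norm_nonneg _)

/-- Bound for a convolution with a compactly supported kernel. -/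
lemma cv_bound {n : ℕ} {w g : EuclideanSpace ℝ (Fin n) → ℝ} (hg : CC n g)
    (x : EuclideanSpace ℝ (Fin n)) (s d : ℝ) (hs : ∀ y, s ≤ ‖y‖ → g y = 0)
    (hd : ∀ y, ‖y - x‖ < s → |w y| ≤ d) :
    |cv n w g x| ≤ d * ∫ y, |g y| := by
  rw [cv_swap, ← integral_const_mul, ← Real.norm_eq_abs]
  refine norm_integral_le_of_norm_le (hg.abs.integrable.const_mul d) ?_
  refine Filter.Eventually.of_forall fun y => ?_
  by_cases hy : s ≤ ‖y‖
  · simp [hs y hy]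
  · push Not at hy
    have h1 := hd (x - y) (by simpa using hy)
    rw [norm_mul]
    exact mul_le_mul_of_nonneg_right h1 (norm_nonneg _)

lemma cv_supp {n : ℕ} {f g : EuclideanSpace ℝ (Fin n) → ℝ} (s t : ℝ)
    (hf : ∀ y, s ≤ ‖y‖ → f y = 0) (hg : ∀ y, t ≤ ‖y‖ → g y = 0)
    (x : EuclideanSpace ℝ (Fin n)) (hx : s + t ≤ ‖x‖) : cv n f g x = 0 := by
  have : ∀ y, f y * g (x - y) = 0 := by
    intro y
    by_cases hy : s ≤ ‖y‖
    · rw [hf y hy, zero_mul]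
    · rw [hg, mul_zero]
      have := norm_sub_norm_le x y
      push Not at hy
      linarith
  simp [cv, this]

section psi
variable {n : ℕ} {ψ : EuclideanSpace ℝ (Fin n) → ℝ}

lemma psiT_cc (hψ : CC n ψ) {t : ℝ} (ht : 0 < t) : CC n (psiT n ψ t) := by
  refine ⟨?_, ?_⟩
  · have := hψ.1
    unfold psiT; fun_prop
  · have := hψ.2.comp_smul (inv_ne_zero ht.ne')
    exact this.mul_left

lemma psiT_int (hψ1 : ∫ x, ψ x = 1) {t : ℝ} (ht : 0 < t) : ∫ x, psiT n ψ t x = 1 := by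
  unfold psiT
  rw [integral_const_mul, Measure.integral_comp_smul, hψ1]
  simp only [finrank_euclideanSpace, Fintype.card_fin, smul_eq_mul, mul_one]
  rw [abs_of_pos (by positivity), mul_inv_cancel₀ (by positivity)]

lemma psiT_abs {t : ℝ} (ht : 0 < t) : ∫ x, |psiT n ψ t x| = ∫ x, |ψ x| := by
  unfold psiT
  have : ∀ x, |(t⁻¹) ^ n * ψ (t⁻¹ • x)| = (t⁻¹) ^ n * (fun y => |ψ y|) (t⁻¹ • x) := by
    intro x; rw [abs_mul, abs_of_pos (by positivity)]
  simp_rw [this]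
  rw [integral_const_mul, Measure.integral_comp_smul volume (fun y => |ψ y|)]
  simp only [finrank_euclideanSpace, Fintype.card_fin, smul_eq_mul]
  rw [abs_of_pos (by positivity), ← mul_assoc, mul_inv_cancel₀ (by positivity), one_mul]

lemma psiT_supp (hs : ∀ y, 1 ≤ ‖y‖ → ψ y = 0) {t : ℝ} (ht : 0 < t) (y : EuclideanSpace ℝ (Fin n))
    (hy : t ≤ ‖y‖) : psiT n ψ t y = 0 := by
  unfold psiT
  rw [hs, mul_zero]
  rw [norm_smul, norm_inv, Real.norm_of_nonneg ht.le, inv_mul_eq_div, le_div_iff₀ ht]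
  linarith

lemma psiT_bd {S : ℝ} (hS : ∀ y, |ψ y| ≤ S) {t : ℝ} (ht : 0 < t) (y : EuclideanSpace ℝ (Fin n)) :
    |psiT n ψ t y| ≤ (t⁻¹) ^ n * S := by
  unfold psiT
  rw [abs_mul, abs_of_pos (by positivity)]
  exact mul_le_mul_of_nonneg_left (hS _) (by positivity)

lemma psiT_lip {S : ℝ} (hS : ∀ x y, |ψ x - ψ y| ≤ S * ‖x - y‖) {t : ℝ} (ht : 0 < t)
    (x y : EuclideanSpace ℝ (Fin n)) :
    |psiT n ψ t x - psiT n ψ t y| ≤ (t⁻¹) ^ n * S * (‖x - y‖ / t) := by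
  unfold psiT
  rw [← mul_sub, abs_mul, abs_of_pos (by positivity), mul_assoc]
  refine mul_le_mul_of_nonneg_left ((hS _ _).trans (le_of_eq ?_)) (by positivity)
  rw [← smul_sub, norm_smul, norm_inv, Real.norm_of_nonneg ht.le]
  field_simp

/-- Telescoping bound. -/
lemma telescope (hψ : CC n ψ) (hψ1 : ∫ x, ψ x = 1) (hs : ∀ y, 1 ≤ ‖y‖ → ψ y = 0)
    {w : EuclideanSpace ℝ (Fin n) → ℝ} (hw : CC n w) (x : EuclideanSpace ℝ (Fin n))
    (T : ℝ) (hT : 0 < T) (b : ℕ → ℝ) (hb0 : ∀ k, 0 ≤ b k) (hb : Summable b)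
    (h1 : ∀ k s' : _, s' = T * (1 / 2) ^ k ∨ s' = T * (1 / 2) ^ (k + 1) →
      |cv n (cv n w (psiT n ψ s'))
        (fun y => psiT n ψ (T * (1 / 2) ^ (k + 1)) y - psiT n ψ (T * (1 / 2) ^ k) y) x| ≤ b k) :
    |w x| ≤ |cv n (cv n w (psiT n ψ T)) (psiT n ψ T) x| + 2 * ∑' k, b k := by
  set s : ℕ → ℝ := fun k => T * (1 / 2) ^ k with hsdef
  have hs0 : ∀ k, 0 < s k := fun k => by positivity
  set v : ℕ → ℝ := fun k => cv n (cv n w (psiT n ψ (s k))) (psiT n ψ (s k)) x with hv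
  have hcc : ∀ k, CC n (psiT n ψ (s k)) := fun k => psiT_cc hψ (hs0 k)
  have hstep : ∀ k, |v (k + 1) - v k| ≤ 2 * b k := by
    intro k
    have ha := h1 k (s k) (Or.inl rfl)
    have hb := h1 k (s (k + 1)) (Or.inr rfl)
    change |cv n (cv n w (psiT n ψ (s k)))
        (fun y => psiT n ψ (s (k + 1)) y - psiT n ψ (s k) y) x| ≤ b k at ha
    change |cv n (cv n w (psiT n ψ (s (k + 1))))
        (fun y => psiT n ψ (s (k + 1)) y - psiT n ψ (s k) y) x| ≤ b k at hb
    rw [cv_sub_right (hw.cv (hcc _)) (hcc _) (hcc _)] at ha hb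
    have hsw : cv n (cv n w (psiT n ψ (s (k + 1)))) (psiT n ψ (s k)) =
        cv n (cv n w (psiT n ψ (s k))) (psiT n ψ (s (k + 1))) := by
      rw [cv_assoc hw (hcc _) (hcc _), cv_comm n (psiT n ψ (s (k + 1))), ← cv_assoc hw (hcc _) (hcc _)]
    rw [hsw] at hb
    rw [abs_le] at ha hb ⊢
    simp only [hv]
    constructor <;> linarith [ha.1, ha.2, hb.1, hb.2]
  have hbound : ∀ K, |v K| ≤ |v 0| + 2 * ∑' k, b k := by
    intro K
    have : |v K| ≤ |v 0| + ∑ k ∈ Finset.range K, 2 * b k := by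
      induction K with
      | zero => simp
      | succ K ih =>
        rw [Finset.sum_range_succ]
        have := abs_add_le (v (K + 1) - v K) (v K)
        rw [sub_add_cancel] at this
        linarith [hstep K]
    rw [← Finset.mul_sum] at this
    linarith [hb.sum_le_tsum (Finset.range K) (fun i _ => hb0 i)]
  have hv0 : v 0 = cv n (cv n w (psiT n ψ T)) (psiT n ψ T) x := by simp [hv, hsdef]
  rw [← hv0]
  refine le_of_tendsto' (x := Filter.atTop) (f := fun K => |v K|) ?_ hbound
  refine (continuous_abs.tendsto (w x)).comp ?_
  rw [Metric.tendsto_atTop]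
  intro ε hε
  set K := ∫ x, |ψ x| with hK
  have hK0 : 0 ≤ K := integral_nonneg fun _ => abs_nonneg _
  set η := ε / (2 * ((2 * K + 1) * K + K + 1)) with hη
  have hη0 : 0 < η := by positivity
  obtain ⟨δ, hδ, huc⟩ := Metric.uniformContinuous_iff.1
    (hw.2.uniformContinuous_of_continuous hw.1) η hη0
  have hlim : Filter.Tendsto s Filter.atTop (nhds 0) := by
    have := (tendsto_pow_atTop_nhds_zero_of_lt_one (r := (1 / 2 : ℝ)) (by norm_num)
      (by norm_num)).const_mul T
    rw [mul_zero] at this; exact this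
  obtain ⟨N, hN⟩ := (Metric.tendsto_atTop.1 hlim) δ hδ
  refine ⟨N, fun k hk => ?_⟩
  have hsk : s k < δ := by
    have := hN k hk
    rwa [Real.dist_eq, sub_zero, abs_of_pos (hs0 k)] at this
  have hA : ∀ y, |cv n w (psiT n ψ (s k)) y - w y| ≤ η * K := by
    intro y
    have := cv_diff hw (hcc k) y (s k) η (fun y => psiT_supp hs (hs0 k) y) (fun y' hy' => by
      have := huc (a := y') (b := y) (by rw [dist_eq_norm]; linarith)
      rw [Real.dist_eq] at this
      exact this.le)
    rwa [psiT_int hψ1 (hs0 k), one_mul, psiT_abs (hs0 k)] at this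
  have hB := cv_diff (hw.cv (hcc k)) (hcc k) x (s k) (η * (2 * K + 1))
    (fun y => psiT_supp hs (hs0 k) y) (fun y' hy' => by
      have h3 := huc (a := y') (b := x) (by rw [dist_eq_norm]; linarith)
      rw [Real.dist_eq] at h3
      have h4 := hA y'
      have h5 := hA x
      rw [abs_le] at h4 h5 ⊢
      rw [abs_lt] at h3
      constructor <;> nlinarith)
  rw [psiT_int hψ1 (hs0 k), one_mul, psiT_abs (hs0 k)] at hB
  rw [Real.dist_eq]
  have hC := hA x
  have hfin : η * ((2 * K + 1) * K + K + 1) = ε / 2 := by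
    rw [hη]; field_simp
  have := abs_sub_le (v k) (cv n w (psiT n ψ (s k)) x) (w x)
  calc |v k - w x| ≤ η * (2 * K + 1) * K + η * K := this.trans (add_le_add hB hC)
    _ < ε := by nlinarith
end psi
section peetre
variable {n : ℕ} {ψ : EuclideanSpace ℝ (Fin n) → ℝ}

lemma peetre_kernel (hψ : CC n ψ) (q : ℝ) (hq0 : 0 < q) (hq1 : q < 1)
    {f : EuclideanSpace ℝ (Fin n) → ℝ} (hf : CC n f) (M : EuclideanSpace ℝ (Fin n) → ℝ≥0∞)
    (hM : ∀ s : ℝ, 0 < s → ∀ y, ENNReal.ofReal |cv n f (psiT n ψ s) y| ≤ M y)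
    (x : EuclideanSpace ℝ (Fin n)) (H : ℝ) (hH : 0 ≤ H)
    (hHM : ∀ R : ℝ, 0 < R → ∫⁻ y in closedBall x R, M y ^ q ≤ ENNReal.ofReal (H * R ^ n))
    (B : ℝ) (hB : 0 ≤ B)
    (hBF : ∀ s : ℝ, 0 < s → ∀ y, |cv n f (psiT n ψ s) y| ≤ B * (1 + ‖x - y‖ / s) ^ (n / q))
    (t s : ℝ) (hs : 0 < s) (hst : s ≤ t) (y : EuclideanSpace ℝ (Fin n))
    {η : EuclideanSpace ℝ (Fin n) → ℝ} (A : ℝ) (hA : 0 ≤ A)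
    (hηA : ∀ z, |η z| ≤ A) (hηs : ∀ z, 2 * t ≤ ‖z‖ → η z = 0) :
    |cv n (cv n f (psiT n ψ s)) η y| ≤ A * t ^ n * (t / s) ^ ((n / q) * (1 - q)) *
      (B ^ (1 - q) * H * 3 ^ (n / q) * (1 + ‖x - y‖ / t) ^ (n / q)) := by
  have ht : 0 < t := hs.trans_le hst
  set a : ℝ := n / q with ha
  have ha0 : 0 ≤ a := by positivity
  set F := cv n f (psiT n ψ s) with hF
  have hFc : CC n F := hf.cv (psiT_cc hψ hs)
  set ρ := ‖x - y‖ / t with hρ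
  have hρ0 : 0 ≤ ρ := by positivity
  have hxy : ‖x - y‖ = t * ρ := by rw [hρ]; field_simp
  set R := t * (2 + ρ) with hR
  have hR0 : 0 < R := by positivity
  set Q := B * ((t / s) * (3 + ρ)) ^ a with hQ
  have hQ0 : 0 ≤ Q := by positivity
  have hint1 : IntegrableOn (fun z => |F z|) (closedBall x R) :=
    (hFc.1.abs.continuousOn).integrableOn_compact (isCompact_closedBall _ _)
  have hcq : Continuous (fun z => |F z| ^ q) := hFc.1.abs.rpow_const (fun _ => Or.inr hq0.le)
  have hint2 : IntegrableOn (fun z => |F z| ^ q) (closedBall x R) :=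
    hcq.continuousOn.integrableOn_compact (isCompact_closedBall _ _)
  have h1 : |cv n F η y| ≤ ∫ z in closedBall x R, A * |F z| := by
    rw [← integral_indicator measurableSet_closedBall, ← Real.norm_eq_abs]
    refine norm_integral_le_of_norm_le
      ((integrable_indicator_iff measurableSet_closedBall).2 (hint1.const_mul A)) ?_
    refine Filter.Eventually.of_forall fun z => ?_
    by_cases hz : z ∈ closedBall x R
    · rw [indicator_of_mem hz, norm_mul, mul_comm]
      exact mul_le_mul_of_nonneg_right (hηA _) (abs_nonneg _)
    · rw [indicator_of_notMem hz, hηs, mul_zero, norm_zero]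
      rw [mem_closedBall, dist_eq_norm, not_le] at hz
      have h2 : ‖z - x‖ ≤ ‖y - z‖ + ‖x - y‖ := by
        have := norm_add_le (y - z) (x - y)
        rwa [show y - z + (x - y) = -(z - x) by abel, norm_neg] at this
      rw [hxy] at h2
      rw [hR] at hz
      linarith
  have h2 : ∫ z in closedBall x R, |F z| ≤ Q ^ (1 - q) * ∫ z in closedBall x R, |F z| ^ q := by
    rw [← integral_const_mul]
    refine setIntegral_mono_on hint1 (hint2.const_mul _) measurableSet_closedBall fun z hz => ?_
    have hz' : |F z| ≤ Q := by
      refine (hBF s hs z).trans ?_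
      rw [hQ]
      refine mul_le_mul_of_nonneg_left ?_ hB
      refine Real.rpow_le_rpow (by positivity) ?_ ha0
      rw [mem_closedBall, dist_eq_norm, norm_sub_rev] at hz
      have h3 : ‖x - z‖ / s ≤ (t / s) * (2 + ρ) := by
        rw [div_le_iff₀ hs]
        calc ‖x - z‖ ≤ t * (2 + ρ) := hz
          _ = _ := by field_simp
      have h4 : 1 ≤ t / s := by rwa [one_le_div hs]
      nlinarith
    rcases (abs_nonneg (F z)).eq_or_lt with h0 | h0
    · rw [← h0, Real.zero_rpow hq0.ne']; simp
    · calc |F z| = |F z| ^ (1 - q) * |F z| ^ q := by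
            rw [← Real.rpow_add h0]; simp
        _ ≤ _ := by
            refine mul_le_mul_of_nonneg_right ?_ (by positivity)
            exact Real.rpow_le_rpow h0.le hz' (by linarith)
  have h3 : ∫ z in closedBall x R, |F z| ^ q ≤ H * R ^ n := by
    rw [integral_eq_lintegral_of_nonneg_ae
      (Filter.Eventually.of_forall fun z => by positivity) hcq.aestronglyMeasurable]
    refine ENNReal.toReal_le_of_le_ofReal (by positivity) ?_
    refine le_trans (lintegral_mono fun z => ?_) (hHM R hR0)
    rw [← ENNReal.ofReal_rpow_of_nonneg (abs_nonneg _) hq0.le]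
    exact ENNReal.rpow_le_rpow (hM s hs z) hq0.le
  have haq : a * q = n := by rw [ha]; field_simp
  have hQe : Q ^ (1 - q) * R ^ n ≤ t ^ n * (t / s) ^ (a * (1 - q)) *
      (B ^ (1 - q) * 3 ^ a * (1 + ρ) ^ a) := by
    have hRn : R ^ n ≤ t ^ n * (3 + ρ) ^ (n : ℝ) := by
      rw [hR, mul_pow, Real.rpow_natCast]
      gcongr
      norm_num
    have hQ1 : Q ^ (1 - q) = B ^ (1 - q) * ((t / s) ^ (a * (1 - q)) * (3 + ρ) ^ (a * (1 - q))) := by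
      rw [hQ, Real.mul_rpow hB (by positivity), ← Real.rpow_mul (by positivity),
        Real.mul_rpow (by positivity) (by positivity)]
    have hpow : (3 + ρ) ^ (a * (1 - q)) * (3 + ρ) ^ (n : ℝ) ≤ 3 ^ a * (1 + ρ) ^ a := by
      rw [← Real.rpow_add (by positivity), ← Real.mul_rpow (by norm_num) (by positivity)]
      have : a * (1 - q) + n = a := by rw [← haq]; ring
      rw [this]
      exact Real.rpow_le_rpow (by positivity) (by linarith) ha0
    calc Q ^ (1 - q) * R ^ n ≤ Q ^ (1 - q) * (t ^ n * (3 + ρ) ^ (n : ℝ)) := by gcongr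
      _ = t ^ n * (t / s) ^ (a * (1 - q)) *
          (B ^ (1 - q) * ((3 + ρ) ^ (a * (1 - q)) * (3 + ρ) ^ (n : ℝ))) := by rw [hQ1]; ring
      _ ≤ t ^ n * (t / s) ^ (a * (1 - q)) * (B ^ (1 - q) * (3 ^ a * (1 + ρ) ^ a)) := by gcongr
      _ = _ := by ring
  rw [integral_const_mul] at h1
  calc |cv n F η y| ≤ A * ∫ z in closedBall x R, |F z| := h1
    _ ≤ A * (Q ^ (1 - q) * (H * R ^ n)) := by
        refine mul_le_mul_of_nonneg_left (h2.trans ?_) hA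
        exact mul_le_mul_of_nonneg_left h3 (by positivity)
    _ = A * H * (Q ^ (1 - q) * R ^ n) := by ring
    _ ≤ A * H * (t ^ n * (t / s) ^ (a * (1 - q)) * (B ^ (1 - q) * 3 ^ a * (1 + ρ) ^ a)) := by
        gcongr
    _ = _ := by ring

lemma peetre_step (hψ : CC n ψ) (hψ1 : ∫ x, ψ x = 1) (hsup : ∀ y, 1 ≤ ‖y‖ → ψ y = 0)
    (S : ℝ) (hS0 : 0 ≤ S) (hS : ∀ y, |ψ y| ≤ S)
    (Λ : ℝ) (hΛ0 : 0 ≤ Λ) (hΛ : ∀ x y, |ψ x - ψ y| ≤ Λ * ‖x - y‖)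
    (q : ℝ) (hq0 : 0 < q) (hq1 : q < 1) (hqn : (n / q) * (1 - q) < 1) :
    ∃ C : ℝ, 0 ≤ C ∧
    ∀ f : EuclideanSpace ℝ (Fin n) → ℝ, CC n f → ∀ M : EuclideanSpace ℝ (Fin n) → ℝ≥0∞,
    (∀ s : ℝ, 0 < s → ∀ y, ENNReal.ofReal |cv n f (psiT n ψ s) y| ≤ M y) →
    ∀ (x : EuclideanSpace ℝ (Fin n)) (H : ℝ), 0 ≤ H →
    (∀ R : ℝ, 0 < R → ∫⁻ y in closedBall x R, M y ^ q ≤ ENNReal.ofReal (H * R ^ n)) →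
    ∀ B : ℝ, 0 ≤ B →
    (∀ s : ℝ, 0 < s → ∀ y, |cv n f (psiT n ψ s) y| ≤ B * (1 + ‖x - y‖ / s) ^ (n / q)) →
    (∀ s : ℝ, 0 < s → ∀ y, |cv n f (psiT n ψ s) y| ≤
      C * H * B ^ (1 - q) * (1 + ‖x - y‖ / s) ^ (n / q)) := by
  set a : ℝ := n / q with ha
  set γ := a * (1 - q) with hγ
  have hγ0 : 0 ≤ γ := by
    have : 0 ≤ a := by positivity
    have : 0 ≤ 1 - q := by linarith
    positivity
  set K := ∫ x, |ψ x| with hK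
  have hK0 : 0 ≤ K := integral_nonneg fun _ => abs_nonneg _
  set θ : ℝ := 2 ^ γ / 2 with hθ
  have hθ0 : 0 ≤ θ := by positivity
  have hθ1 : θ < 1 := by
    rw [hθ, div_lt_one (by norm_num)]
    calc (2 : ℝ) ^ γ < 2 ^ (1 : ℝ) := Real.rpow_lt_rpow_of_exponent_lt (by norm_num) hqn
      _ = 2 := by norm_num
  have hθ2 : 0 < 1 - θ := by linarith
  refine ⟨(S * K + 2 * (Λ * (2 * K) * 2 ^ γ * (1 - θ)⁻¹)) * 3 ^ a, by positivity, ?_⟩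
  intro f hf M hM x H hH hHM B hB hBF t ht y
  set Y := B ^ (1 - q) * H * 3 ^ a * (1 + ‖x - y‖ / t) ^ a with hY
  have hY0 : 0 ≤ Y := by positivity
  have hpt : CC n (psiT n ψ t) := psiT_cc hψ ht
  have hF : CC n (cv n f (psiT n ψ t)) := hf.cv hpt
  have htn : (t⁻¹) ^ n * t ^ n = 1 := by rw [← mul_pow, inv_mul_cancel₀ ht.ne', one_pow]
  have hmain : |cv n (cv n (cv n f (psiT n ψ t)) (psiT n ψ t)) (psiT n ψ t) y| ≤ S * K * Y := by
    rw [cv_assoc hF hpt hpt]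
    have hη : ∀ z, |cv n (psiT n ψ t) (psiT n ψ t) z| ≤ (t⁻¹) ^ n * S * K := by
      intro z
      have := cv_bound (w := psiT n ψ t) hpt z t ((t⁻¹) ^ n * S) (fun y => psiT_supp hsup ht y)
        (fun y _ => psiT_bd hS ht y)
      rwa [psiT_abs ht] at this
    have := peetre_kernel hψ q hq0 hq1 hf M hM x H hH hHM B hB hBF t t ht le_rfl y
      ((t⁻¹) ^ n * S * K) (by positivity) hη (fun z hz => cv_supp t t
        (fun y => psiT_supp hsup ht y) (fun y => psiT_supp hsup ht y) z (by linarith))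
    refine this.trans (le_of_eq ?_)
    rw [div_self ht.ne', Real.one_rpow, ← ha, ← hY]
    linear_combination (S * K * Y) * htn
  have htel := telescope hψ hψ1 hsup hF y t ht (fun k => Λ * (2 * K) * 2 ^ γ * Y * θ ^ k)
    (fun k => by positivity)
    ((summable_geometric_of_lt_one hθ0 hθ1).mul_left _) (by
    intro k s' hs'
    set s := t * (1 / 2) ^ k with hs
    have hhalf : (1 / 2 : ℝ) ^ k ≤ 1 := pow_le_one₀ (by norm_num) (by norm_num)
    have hs0 : 0 < s := by positivity
    have hst : s ≤ t := by rw [hs]; nlinarith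
    set s2 := t * (1 / 2) ^ (k + 1) with hs2
    have hs20 : 0 < s2 := by positivity
    have hs2s : s2 ≤ s := by rw [hs2, hs, pow_succ]; nlinarith [pow_pos (show (0 : ℝ) < 1/2 by norm_num) k]
    have hs'0 : 0 < s' := by rcases hs' with h | h <;> rw [h] <;> assumption
    have hs't : s' ≤ t := by rcases hs' with h | h <;> rw [h] <;> linarith
    have hs'l : s2 ≤ s' := by rcases hs' with h | h <;> rw [h]; exact hs2s
    have hps : CC n (psiT n ψ s) := psiT_cc hψ hs0
    have hps2 : CC n (psiT n ψ s2) := psiT_cc hψ hs20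
    have hps' : CC n (psiT n ψ s') := psiT_cc hψ hs'0
    set g := fun y => psiT n ψ s2 y - psiT n ψ s y with hg
    have hgc : CC n g := hps2.sub hps
    have hgs : ∀ y, s ≤ ‖y‖ → g y = 0 := by
      intro y hy
      rw [hg]
      dsimp only
      rw [psiT_supp hsup hs0 y hy, psiT_supp hsup hs20 y (hs2s.trans hy), sub_zero]
    have hg0 : ∫ y, g y = 0 := by
      rw [hg, integral_sub hps2.integrable hps.integrable, psiT_int hψ1 hs0, psiT_int hψ1 hs20,
        sub_self]
    have hg1 : ∫ y, |g y| ≤ 2 * K := by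
      calc ∫ y, |g y| ≤ ∫ y, (|psiT n ψ s2 y| + |psiT n ψ s y|) :=
            integral_mono hgc.abs.integrable (hps2.abs.integrable.add hps.abs.integrable)
              (fun y => abs_sub _ _)
        _ = 2 * K := by
            have i1 : Integrable (fun y => |psiT n ψ s y|) := hps.abs.integrable
            have i2 : Integrable (fun y => |psiT n ψ s2 y|) := hps2.abs.integrable
            rw [integral_add i2 i1]
            have e1 := psiT_abs (n := n) (ψ := ψ) hs0
            have e2 := psiT_abs (n := n) (ψ := ψ) hs20
            rw [e1, e2]; ring
    have hη : ∀ z, |cv n (psiT n ψ t) g z| ≤ (t⁻¹) ^ n * Λ * (1 / 2) ^ k * (2 * K) := by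
      intro z
      have h := cv_diff hpt hgc z s ((t⁻¹) ^ n * Λ * (1 / 2) ^ k) hgs (fun y hy => by
        refine (psiT_lip hΛ ht y z).trans ?_
        refine mul_le_mul_of_nonneg_left ?_ (by positivity)
        rw [div_le_iff₀ ht]; linarith)
      rw [hg0, zero_mul, sub_zero] at h
      exact h.trans (mul_le_mul_of_nonneg_left hg1 (by positivity))
    have hsw : cv n (cv n (cv n f (psiT n ψ t)) (psiT n ψ s')) g =
        cv n (cv n f (psiT n ψ s')) (cv n (psiT n ψ t) g) := by
      rw [cv_assoc hf hpt hps', cv_comm n (psiT n ψ t), ← cv_assoc hf hps' hpt,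
        cv_assoc (hf.cv hps') hpt hgc]
    rw [hsw]
    have := peetre_kernel hψ q hq0 hq1 hf M hM x H hH hHM B hB hBF t s' hs'0 hs't y
      ((t⁻¹) ^ n * Λ * (1 / 2) ^ k * (2 * K)) (by positivity) hη (fun z hz => cv_supp t s
        (fun y => psiT_supp hsup ht y) hgs z (by linarith))
    refine this.trans ?_
    rw [← ha, ← hY, ← hγ]
    have hts : (t / s') ^ γ ≤ 2 ^ γ * (2 ^ γ) ^ k := by
      have : t / s' ≤ 2 * 2 ^ k := by
        rw [div_le_iff₀ hs'0]
        calc t = 2 * 2 ^ k * s2 := by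
              rw [hs2, pow_succ]
              have : (2 : ℝ) ^ k * (1 / 2) ^ k = 1 := by rw [← mul_pow]; norm_num
              linear_combination (-t) * this
          _ ≤ 2 * 2 ^ k * s' := by gcongr
      calc (t / s') ^ γ ≤ (2 * 2 ^ k) ^ γ := Real.rpow_le_rpow (by positivity) this hγ0
        _ = 2 ^ γ * (2 ^ γ) ^ k := by
          rw [Real.mul_rpow (by norm_num) (by positivity), ← Real.rpow_natCast,
            ← Real.rpow_natCast, ← Real.rpow_mul (by norm_num), ← Real.rpow_mul (by norm_num),
            mul_comm γ]
    calc (t⁻¹) ^ n * Λ * (1 / 2) ^ k * (2 * K) * t ^ n * (t / s') ^ γ * Y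
        = Λ * (2 * K) * (1 / 2) ^ k * (t / s') ^ γ * Y := by
          linear_combination (Λ * (2 * K) * (1 / 2) ^ k * (t / s') ^ γ * Y) * htn
      _ ≤ Λ * (2 * K) * (1 / 2) ^ k * (2 ^ γ * (2 ^ γ) ^ k) * Y := by gcongr
      _ = Λ * (2 * K) * 2 ^ γ * Y * θ ^ k := by
          rw [hθ, div_eq_mul_one_div, mul_pow]; ring)
  rw [_root_.tsum_mul_left, tsum_geometric_of_lt_one hθ0 hθ1] at htel
  refine htel.trans ((add_le_add_left hmain _).trans (le_of_eq ?_))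
  rw [hY]; ring

lemma peetre (hψ : CC n ψ) (hψ1 : ∫ x, ψ x = 1) (hsup : ∀ y, 1 ≤ ‖y‖ → ψ y = 0)
    (S : ℝ) (hS0 : 0 ≤ S) (hS : ∀ y, |ψ y| ≤ S)
    (Λ : ℝ) (hΛ0 : 0 ≤ Λ) (hΛ : ∀ x y, |ψ x - ψ y| ≤ Λ * ‖x - y‖)
    (q : ℝ) (hq0 : 0 < q) (hq1 : q < 1) (hqn : (n / q) * (1 - q) < 1) :
    ∃ C : ℝ, 0 ≤ C ∧
    ∀ f : EuclideanSpace ℝ (Fin n) → ℝ, CC n f → ∀ M : EuclideanSpace ℝ (Fin n) → ℝ≥0∞,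
    (∀ s : ℝ, 0 < s → ∀ y, ENNReal.ofReal |cv n f (psiT n ψ s) y| ≤ M y) →
    ∀ (x : EuclideanSpace ℝ (Fin n)) (H : ℝ), 0 ≤ H →
    (∀ R : ℝ, 0 < R → ∫⁻ y in closedBall x R, M y ^ q ≤ ENNReal.ofReal (H * R ^ n)) →
    (∀ s : ℝ, 0 < s → ∀ y, |cv n f (psiT n ψ s) y| ≤
      (C * H) ^ (1 / q) * (1 + ‖x - y‖ / s) ^ (n / q)) := by
  obtain ⟨C, hC, hstep⟩ := peetre_step hψ hψ1 hsup S hS0 hS Λ hΛ0 hΛ q hq0 hq1 hqn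
  refine ⟨C, hC, ?_⟩
  intro f hf M hM x H hH hHM
  have ha0 : 0 ≤ (n : ℝ) / q := by positivity
  let G : {s : ℝ // 0 < s} × EuclideanSpace ℝ (Fin n) → ℝ := fun i =>
    |cv n f (psiT n ψ i.1.1) i.2| / (1 + ‖x - i.2‖ / i.1.1) ^ ((n : ℝ) / q)
  have hone : ∀ (s : ℝ), 0 < s → ∀ y : EuclideanSpace ℝ (Fin n),
      1 ≤ (1 + ‖x - y‖ / s) ^ ((n : ℝ) / q) := fun s hs y =>
    Real.one_le_rpow (by have : 0 ≤ ‖x - y‖ / s := by positivity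
                         linarith) ha0
  obtain ⟨S', hS'0, hS'⟩ := hf.bdd
  have hbdd : BddAbove (range G) := by
    refine ⟨S' * ∫ x, |ψ x|, ?_⟩
    rintro _ ⟨⟨⟨s, hs⟩, y⟩, rfl⟩
    have h1 := cv_bound (w := f) (psiT_cc hψ hs) y s S' (fun y => psiT_supp hsup hs y)
      (fun y _ => hS' y)
    rw [psiT_abs hs] at h1
    exact (div_le_self (abs_nonneg _) (hone s hs y)).trans h1
  have : Nonempty ({s : ℝ // 0 < s} × EuclideanSpace ℝ (Fin n)) := ⟨⟨⟨1, one_pos⟩, 0⟩⟩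
  set P := ⨆ i, G i with hP
  have hP0 : 0 ≤ P := Real.iSup_nonneg fun i => by
    have := i.1.2
    positivity
  have hPb : ∀ s : ℝ, 0 < s → ∀ y, |cv n f (psiT n ψ s) y| ≤
      P * (1 + ‖x - y‖ / s) ^ ((n : ℝ) / q) := by
    intro s hs y
    rw [← div_le_iff₀ (by linarith [hone s hs y])]
    exact le_ciSup hbdd (⟨⟨s, hs⟩, y⟩ : {s : ℝ // 0 < s} × EuclideanSpace ℝ (Fin n))
  have h2 := hstep f hf M hM x H hH hHM P hP0 hPb
  have h3 : P ≤ C * H * P ^ (1 - q) := by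
    refine ciSup_le fun i => ?_
    rw [div_le_iff₀ (by linarith [hone i.1.1 i.1.2 i.2])]
    exact h2 i.1.1 i.1.2 i.2
  have h4 : P ≤ (C * H) ^ (1 / q) := by
    rcases hP0.eq_or_lt with h0 | h0
    · rw [← h0]; positivity
    have h5 : P ^ q ≤ C * H := by
      have h6 : P ^ q * P ^ (1 - q) = P := by rw [← Real.rpow_add h0]; simp
      have h7 : 0 < P ^ (1 - q) := Real.rpow_pos_of_pos h0 _
      refine le_of_mul_le_mul_right ?_ h7
      rw [h6]; exact h3
    calc P = (P ^ q) ^ (1 / q) := by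
          rw [← Real.rpow_mul hP0, mul_one_div_cancel hq0.ne', Real.rpow_one]
      _ ≤ _ := Real.rpow_le_rpow (by positivity) h5 (by positivity)
  intro s hs y
  exact (hPb s hs y).trans (mul_le_mul_of_nonneg_right h4 (by linarith [hone s hs y]))
end peetre
section pointwise
variable {n : ℕ} {ψ : EuclideanSpace ℝ (Fin n) → ℝ}

lemma pderiv_cc {u : EuclideanSpace ℝ (Fin n) → ℝ} (hu : ContDiff ℝ 1 u)
    (huc : HasCompactSupport u) (j : Fin n) : CC n (pderivIdx n j u) := by
  refine ⟨?_, ?_⟩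
  · unfold pderivIdx
    exact (hu.continuous_fderiv one_ne_zero).clm_apply continuous_const
  · have := huc.fderiv (𝕜 := ℝ)
    exact this.comp_left (g := fun L : EuclideanSpace ℝ (Fin n) →L[ℝ] ℝ =>
      L (EuclideanSpace.single j 1)) (by simp)

lemma grad_cv {g : EuclideanSpace ℝ (Fin n) → ℝ} (hg : CC n g)
    {u : EuclideanSpace ℝ (Fin n) → ℝ} (hu : ContDiff ℝ 1 u)
    (huc : HasCompactSupport u) (y : EuclideanSpace ℝ (Fin n)) :
    ∃ L : EuclideanSpace ℝ (Fin n) →L[ℝ] ℝ, HasFDerivAt (cv n u g) L y ∧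
      ‖L‖ ≤ ∑ j, |cv n (pderivIdx n j u) g y| := by
  have h := huc.hasFDerivAt_convolution_right (ContinuousLinearMap.mul ℝ ℝ)
    (f := g) (μ := volume) hg.1.locallyIntegrable hu y
  rw [← cv_eq, cv_comm] at h
  refine ⟨_, h, ?_⟩
  refine ContinuousLinearMap.opNorm_le_bound _ (Finset.sum_nonneg fun _ _ => abs_nonneg _) fun v => ?_
  have hj : ∀ j, ((convolution g (fderiv ℝ u) ((ContinuousLinearMap.mul ℝ ℝ).precompR
      (EuclideanSpace ℝ (Fin n))) volume) y) (EuclideanSpace.single j 1) =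
      cv n (pderivIdx n j u) g y := by
    intro j
    rw [convolution_precompR_apply _ hg.1.locallyIntegrable (huc.fderiv ℝ)
      (hu.continuous_fderiv one_ne_zero), cv_comm]
    rfl
  set L := (convolution g (fderiv ℝ u) ((ContinuousLinearMap.mul ℝ ℝ).precompR
      (EuclideanSpace ℝ (Fin n))) volume) y
  have hv : v = ∑ j, v j • EuclideanSpace.single j (1 : ℝ) := by
    have := (EuclideanSpace.basisFun (Fin n) ℝ).sum_repr v
    simpa using this.symm
  have hLv : L v = ∑ j, v j * cv n (pderivIdx n j u) g y := by
    conv_lhs => rw [hv]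
    simp only [map_sum, map_smul, smul_eq_mul, hj]
  rw [hLv, Finset.sum_mul]
  refine (norm_sum_le _ _).trans (Finset.sum_le_sum fun j _ => ?_)
  rw [norm_mul, mul_comm, Real.norm_eq_abs]
  exact mul_le_mul_of_nonneg_left (PiLp.norm_apply_le v j) (abs_nonneg _)

lemma grad_diff {g : EuclideanSpace ℝ (Fin n) → ℝ} (hg : CC n g)
    {u : EuclideanSpace ℝ (Fin n) → ℝ} (hu : ContDiff ℝ 1 u)
    (huc : HasCompactSupport u) (x : EuclideanSpace ℝ (Fin n)) (R D : ℝ)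
    (hD : ∀ y ∈ closedBall x R, ∑ j, |cv n (pderivIdx n j u) g y| ≤ D)
    {y z : EuclideanSpace ℝ (Fin n)} (hy : y ∈ closedBall x R) (hz : z ∈ closedBall x R) :
    |cv n u g y - cv n u g z| ≤ D * ‖y - z‖ := by
  choose L hL hL2 using grad_cv hg hu huc
  exact Convex.norm_image_sub_le_of_norm_hasFDerivWithin_le
    (fun v _ => (hL v).hasFDerivWithinAt) (fun v hv => (hL2 v).trans (hD v hv))
    (convex_closedBall x R) hz hy

lemma pointwise_bound (hψ : CC n ψ) (hψ1 : ∫ x, ψ x = 1) (hsup : ∀ y, 1 ≤ ‖y‖ → ψ y = 0)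
    {u : EuclideanSpace ℝ (Fin n) → ℝ} (hu : ContDiff ℝ 1 u)
    (huc : HasCompactSupport u) (x : EuclideanSpace ℝ (Fin n)) (a P : ℝ) (ha : 0 ≤ a) (hP : 0 ≤ P)
    (hb : ∀ s : ℝ, 0 < s → ∀ y, ∑ j, |cv n (pderivIdx n j u) (psiT n ψ s) y| ≤
      P * (1 + ‖x - y‖ / s) ^ a)
    (T D : ℝ) (hT : 0 < T) (hD : 0 ≤ D) (w : EuclideanSpace ℝ (Fin n)) (hw : dist x w ≤ D)
    (hu0 : ∀ v, dist v w < T → u v = 0) :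
    |u x| ≤ P * (1 + (D + T) / T) ^ a * (D + T) * (∫ y, |ψ y|) +
      8 * (P * 3 ^ a * T * ∫ y, |ψ y|) := by
  set K := ∫ x, |ψ x| with hK
  have hK0 : 0 ≤ K := integral_nonneg fun _ => abs_nonneg _
  have huC : CC n u := ⟨hu.continuous, huc⟩
  have hdiff : ∀ s : ℝ, 0 < s → ∀ R : ℝ, ∀ y ∈ closedBall x R, ∀ z ∈ closedBall x R,
      |cv n u (psiT n ψ s) y - cv n u (psiT n ψ s) z| ≤ P * (1 + R / s) ^ a * ‖y - z‖ := by
    intro s hs R y hy z hz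
    refine grad_diff (psiT_cc hψ hs) hu huc x R _ (fun v hv => (hb s hs v).trans ?_) hy hz
    rw [mem_closedBall, dist_comm, dist_eq_norm] at hv
    gcongr
  have htel := telescope hψ hψ1 hsup huC x T hT (fun k => P * 3 ^ a * T * (2 * K) * (1 / 2) ^ k)
    (fun k => by positivity)
    ((summable_geometric_of_lt_one (by norm_num) (by norm_num)).mul_left _) (by
    intro k s' hs'
    set s := T * (1 / 2) ^ k with hs
    have hs0 : 0 < s := by positivity
    set s2 := T * (1 / 2) ^ (k + 1) with hs2
    have hs20 : 0 < s2 := by positivity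
    have hs2e : s = 2 * s2 := by rw [hs2, hs, pow_succ]; ring
    have hs'0 : 0 < s' := by rcases hs' with h | h <;> rw [h] <;> assumption
    have hs'l : s2 ≤ s' := by rcases hs' with h | h <;> rw [h]; linarith
    have hps : CC n (psiT n ψ s) := psiT_cc hψ hs0
    have hps2 : CC n (psiT n ψ s2) := psiT_cc hψ hs20
    have hps' : CC n (psiT n ψ s') := psiT_cc hψ hs'0
    set g := fun y => psiT n ψ s2 y - psiT n ψ s y with hg
    have hgc : CC n g := hps2.sub hps
    have hgs : ∀ y, s ≤ ‖y‖ → g y = 0 := by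
      intro y hy
      rw [hg]
      dsimp only
      rw [psiT_supp hsup hs0 y hy, psiT_supp hsup hs20 y (by linarith), sub_zero]
    have hg0 : ∫ y, g y = 0 := by
      rw [hg, integral_sub hps2.integrable hps.integrable, psiT_int hψ1 hs0, psiT_int hψ1 hs20,
        sub_self]
    have hg1 : ∫ y, |g y| ≤ 2 * K := by
      calc ∫ y, |g y| ≤ ∫ y, (|psiT n ψ s2 y| + |psiT n ψ s y|) :=
            integral_mono hgc.abs.integrable (hps2.abs.integrable.add hps.abs.integrable)
              (fun y => abs_sub _ _)
        _ = 2 * K := by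
            have i1 : Integrable (fun y => |psiT n ψ s y|) := hps.abs.integrable
            have i2 : Integrable (fun y => |psiT n ψ s2 y|) := hps2.abs.integrable
            rw [integral_add i2 i1]
            have e1 := psiT_abs (n := n) (ψ := ψ) hs0
            have e2 := psiT_abs (n := n) (ψ := ψ) hs20
            rw [e1, e2]; ring
    have h := cv_diff (huC.cv hps') hgc x s (P * 3 ^ a * s) hgs (fun y hy => by
      have h1 := hdiff s' hs'0 s y (by rw [mem_closedBall, dist_eq_norm]; exact hy.le) x
        (by simp [hs0.le])
      refine h1.trans ?_
      have h2 : s / s' ≤ 2 := by rw [div_le_iff₀ hs'0]; linarith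
      have h3 : (1 + s / s') ^ a ≤ 3 ^ a := Real.rpow_le_rpow (by positivity) (by linarith) ha
      gcongr)
    rw [hg0, zero_mul, sub_zero] at h
    refine h.trans ((mul_le_mul_of_nonneg_left hg1 (by positivity)).trans (le_of_eq ?_))
    rw [hs]; ring)
  rw [_root_.tsum_mul_left, tsum_geometric_of_lt_one (by norm_num) (by norm_num)] at htel
  have hmain : |cv n (cv n u (psiT n ψ T)) (psiT n ψ T) x| ≤
      P * (1 + (D + T) / T) ^ a * (D + T) * K := by
    have hvw : cv n u (psiT n ψ T) w = 0 := by
      have := cv_bound (w := u) (psiT_cc hψ hT) w T 0 (fun y => psiT_supp hsup hT y)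
        (fun y hy => by rw [hu0 y (by rwa [dist_eq_norm]), abs_zero])
      rw [zero_mul] at this
      exact abs_eq_zero.1 (le_antisymm this (abs_nonneg _))
    have := cv_bound (w := cv n u (psiT n ψ T)) (psiT_cc hψ hT) x T
      (P * (1 + (D + T) / T) ^ a * (D + T)) (fun y => psiT_supp hsup hT y) (fun y hy => by
        rw [← dist_eq_norm] at hy
        have h1 := hdiff T hT (D + T) y (by rw [mem_closedBall]; linarith) w
          (by rw [mem_closedBall, dist_comm]; linarith)
        rw [hvw, sub_zero] at h1
        refine h1.trans ?_
        have : ‖y - w‖ ≤ D + T := by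
          rw [← dist_eq_norm]
          linarith [dist_triangle y x w]
        gcongr)
    rwa [psiT_abs hT] at this
  refine htel.trans ((add_le_add_left hmain _).trans (le_of_eq ?_))
  norm_num
  ring
end pointwise
lemma rpow_sum_le_en {ι : Type*} (s : Finset ι) (f : ι → ℝ≥0∞) (p : ℝ) (hp0 : 0 < p)
    (hp1 : p ≤ 1) : (∑ i ∈ s, f i) ^ p ≤ ∑ i ∈ s, f i ^ p := by
  classical
  induction s using Finset.induction_on with
  | empty => simp [hp0]
  | insert a s ha ih =>
    rw [Finset.sum_insert ha, Finset.sum_insert ha]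
    exact (ENNReal.rpow_add_le_add_rpow _ _ hp0.le hp1).trans (add_le_add_right ih _)

lemma convMax_eq (n : ℕ) (ψ u : EuclideanSpace ℝ (Fin n) → ℝ) (j : Fin n)
    (x : EuclideanSpace ℝ (Fin n)) : convMax n ψ u j x =
    ⨆ (t : {s : ℝ // 0 < s}), ENNReal.ofReal |cv n (pderivIdx n j u) (psiT n ψ t.1) x| := rfl

lemma convMax_meas (n : ℕ) (ψ u : EuclideanSpace ℝ (Fin n) → ℝ) (hψ : CC n ψ)
    (hu : ContDiff ℝ 1 u) (huc : HasCompactSupport u) (j : Fin n) :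
    Measurable (convMax n ψ u j) := by
  have : LowerSemicontinuous (fun x => ⨆ (t : {s : ℝ // 0 < s}),
      ENNReal.ofReal |cv n (pderivIdx n j u) (psiT n ψ t.1) x|) := by
    refine lowerSemicontinuous_iSup fun t => Continuous.lowerSemicontinuous ?_
    exact ENNReal.continuous_ofReal.comp
      ((pderiv_cc hu huc j).cv (psiT_cc hψ t.2)).1.abs
  exact this.measurable

lemma hardy_pointwise (m : ℕ) (p q : ℝ) (hp0 : 0 < p) (hp2 : p ≤ 1)
    (hq0 : 0 < q) (hq1 : q < 1) (hqn : (((m + 1 : ℕ) : ℝ) / q) * (1 - q) < 1)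
    (Ω : Set (EuclideanSpace ℝ (Fin (m + 1)))) (hΩ : IsLipschitzDomain m Ω)
    (ψ : EuclideanSpace ℝ (Fin (m + 1)) → ℝ) (hψ : CC (m + 1) ψ) (hψint : ∫ x, ψ x = 1)
    (hsup : ∀ y, 1 ≤ ‖y‖ → ψ y = 0)
    (Λ : ℝ) (hΛ0 : 0 ≤ Λ) (hΛ : ∀ x y, |ψ x - ψ y| ≤ Λ * ‖x - y‖) :
    ∃ E : ℝ≥0∞, E ≠ ⊤ ∧ ∀ u : EuclideanSpace ℝ (Fin (m + 1)) → ℝ,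
        ContDiff ℝ 1 u → HasCompactSupport u → tsupport u ⊆ Ω → ∀ x ∈ Ω,
        ENNReal.ofReal (|u x| / infDist x (frontier Ω)) ^ p ≤
          ∑ j : Fin (m + 1), E * hlMax (m + 1) (fun y => convMax (m + 1) ψ u j y ^ q) x ^ (p / q) := by
  obtain ⟨S, hS0, hS⟩ := hψ.bdd
  obtain ⟨c, hc, hck⟩ := corkscrew m Ω hΩ
  obtain ⟨C₀, hC₀, hpe⟩ := peetre hψ hψint hsup S hS0 hS Λ hΛ0 hΛ q hq0 hq1 hqn
  set a : ℝ := ((m + 1 : ℕ) : ℝ) / q with ha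
  have ha0 : 0 ≤ a := by positivity
  set K := ∫ y, |ψ y| with hK
  have hK0 : 0 ≤ K := integral_nonneg fun _ => abs_nonneg _
  set A : ℝ := K * ((1 + (2 + c) / c) ^ a * (2 + c) + 8 * (3 ^ a * c)) with hA
  have hA0 : 0 ≤ A := by positivity
  set A₁ : ℝ := (A + 1) * (C₀ + 1) ^ (1 / q) with hA1
  have hA10 : 0 < A₁ := by positivity
  refine ⟨ENNReal.ofReal A₁ ^ p, ENNReal.rpow_ne_top_of_nonneg hp0.le ENNReal.ofReal_ne_top, ?_⟩
  intro u hu huc hus x hx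
  have hE0 : ENNReal.ofReal A₁ ^ p ≠ 0 := by
    rw [Ne, ENNReal.rpow_eq_zero_iff]
    simp [hp0, hA10, hp0.not_gt]
  have hpq : 0 < p / q := by positivity
  set h : Fin (m + 1) → ℝ≥0∞ :=
    fun j => hlMax (m + 1) (fun y => convMax (m + 1) ψ u j y ^ q) x with hh
  by_cases htop : ∃ j, h j = ⊤
  · obtain ⟨j, hj⟩ := htop
    refine le_trans ?_ (Finset.single_le_sum (fun i _ => zero_le) (Finset.mem_univ j))
    change _ ≤ _ * h j ^ (p / q)
    rw [hj, ENNReal.top_rpow_of_pos hpq, ENNReal.mul_top hE0]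
    exact le_top
  push Not at htop
  obtain ⟨hd, w, hw, hwo⟩ := hck x hx
  set d := infDist x (frontier Ω) with hdd
  have hP : ∀ j, ∀ s : ℝ, 0 < s → ∀ y, |cv (m + 1) (pderivIdx (m + 1) j u) (psiT (m + 1) ψ s) y| ≤
      (C₀ * (h j).toReal) ^ (1 / q) * (1 + ‖x - y‖ / s) ^ a := by
    intro j
    refine hpe _ (pderiv_cc hu huc j) (convMax (m + 1) ψ u j) ?_ x _ ENNReal.toReal_nonneg ?_
    · intro s hs y
      rw [convMax_eq]
      exact le_iSup (fun t : {s : ℝ // 0 < s} =>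
        ENNReal.ofReal |cv (m + 1) (pderivIdx (m + 1) j u) (psiT (m + 1) ψ t.1) y|) ⟨s, hs⟩
    · intro R hR
      rw [ENNReal.ofReal_mul ENNReal.toReal_nonneg, ENNReal.ofReal_toReal (htop j)]
      have hRn : 0 < R ^ (m + 1) := by positivity
      rw [← ENNReal.div_le_iff (by simpa using hRn) ENNReal.ofReal_ne_top]
      exact le_iSup (fun R : {s : ℝ // 0 < s} =>
        (∫⁻ y in closedBall x R.1, convMax (m + 1) ψ u j y ^ q) /
          ENNReal.ofReal (R.1 ^ (m + 1))) ⟨R, hR⟩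
  set P : ℝ := ∑ j, (C₀ * (h j).toReal) ^ (1 / q) with hPdef
  have hP0 : 0 ≤ P := Finset.sum_nonneg fun j _ => by positivity
  have hpt := pointwise_bound hψ hψint hsup hu huc x a P ha0 hP0 (fun s hs y => by
    rw [hPdef, Finset.sum_mul]
    exact Finset.sum_le_sum fun j _ => hP j s hs y) (c * d) (2 * d) (by positivity) (by positivity)
    w hw (fun v hv => image_eq_zero_of_notMem_tsupport fun hv' => hwo v hv (hus hv'))
  have e1 : (2 * d + c * d) / (c * d) = (2 + c) / c := by field_simp
  rw [e1, ← hK] at hpt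
  have hle : |u x| / d ≤ ∑ j, A₁ * (h j).toReal ^ (1 / q) := by
    rw [div_le_iff₀ hd]
    calc |u x| ≤ A * P * d := by refine hpt.trans (le_of_eq ?_); rw [hA]; ring
      _ ≤ (∑ j, A₁ * (h j).toReal ^ (1 / q)) * d := by
        refine mul_le_mul_of_nonneg_right ?_ hd.le
        rw [hPdef, Finset.mul_sum]
        refine Finset.sum_le_sum fun j _ => ?_
        rw [Real.mul_rpow hC₀ ENNReal.toReal_nonneg, hA1, ← mul_assoc]
        gcongr <;> linarith
  calc ENNReal.ofReal (|u x| / d) ^ p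
      ≤ ENNReal.ofReal (∑ j, A₁ * (h j).toReal ^ (1 / q)) ^ p :=
        ENNReal.rpow_le_rpow (ENNReal.ofReal_le_ofReal hle) hp0.le
    _ = (∑ j, ENNReal.ofReal (A₁ * (h j).toReal ^ (1 / q))) ^ p := by
        rw [ENNReal.ofReal_sum_of_nonneg fun j _ => by positivity]
    _ ≤ ∑ j, ENNReal.ofReal (A₁ * (h j).toReal ^ (1 / q)) ^ p := rpow_sum_le_en _ _ p hp0 hp2
    _ = _ := by
        refine Finset.sum_congr rfl fun j _ => ?_
        rw [ENNReal.ofReal_mul hA10.le, ENNReal.mul_rpow_of_nonneg _ _ hp0.le,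
          ← ENNReal.ofReal_rpow_of_nonneg ENNReal.toReal_nonneg (by positivity),
          ENNReal.ofReal_toReal (htop j), ← ENNReal.rpow_mul]
        congr 2
        ring

/-- **Theorem 4.2.** Hardy's inequality for Hardy–Sobolev functions on a bounded
Lipschitz domain `Ω ⊆ ℝⁿ` (`n = m+1 ≥ 1`), in the range `n/(n+1) < p ≤ 1`:
`∫_Ω (|u|/dist(·,∂Ω))^p ≤ C Σ_j ‖sup_{t>0} |(∂_j u) * ψ_t|‖_{L^p}^p` for every smooth
`u` compactly supported in `Ω`. -/
theorem hardy_inequality_lipschitz_domain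
    (m : ℕ) (p : ℝ)
    (hp1 : ((m + 1 : ℕ) : ℝ) / ((m + 1 : ℕ) + 1) < p) (hp2 : p ≤ 1)
    (Ω : Set (EuclideanSpace ℝ (Fin (m + 1)))) (hΩ : IsLipschitzDomain m Ω)
    (ψ : EuclideanSpace ℝ (Fin (m + 1)) → ℝ) (hψ : ContDiff ℝ (⊤ : ℕ∞) ψ)
    (hψsupp : tsupport ψ ⊆ ball 0 1) (hψint : ∫ x, ψ x = 1) :
    ∃ C : ℝ≥0∞, C ≠ ⊤ ∧
      ∀ u : EuclideanSpace ℝ (Fin (m + 1)) → ℝ,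
        ContDiff ℝ (⊤ : ℕ∞) u → HasCompactSupport u → tsupport u ⊆ Ω →
        ∫⁻ x in Ω, ENNReal.ofReal (|u x| / infDist x (frontier Ω)) ^ p ≤
          C * ∑ j : Fin (m + 1), ∫⁻ x, convMax (m + 1) ψ u j x ^ p := by
  have hn1 : (0 : ℝ) < ((m + 1 : ℕ) : ℝ) := by positivity
  set N : ℝ := ((m + 1 : ℕ) : ℝ) with hN
  set b : ℝ := N / (N + 1) with hb
  have hb0 : 0 < b := by positivity
  obtain ⟨q, hq, hqp⟩ := exists_between hp1
  have hq0 : 0 < q := hb0.trans hq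
  have hp0 : 0 < p := hq0.trans hqp
  have hq1 : q < 1 := hqp.trans_le hp2
  have hqn : (N / q) * (1 - q) < 1 := by
    rw [hb, div_lt_iff₀ (by positivity)] at hq
    rw [div_mul_eq_mul_div, div_lt_one hq0]
    linarith
  have hψ1 : ContDiff ℝ 1 ψ := hψ.of_le (by norm_cast)
  have hψc : HasCompactSupport ψ :=
    (isCompact_closedBall (0 : EuclideanSpace ℝ (Fin (m + 1))) 1).of_isClosed_subset
      (isClosed_tsupport ψ) (hψsupp.trans ball_subset_closedBall)
  have hψC : CC (m + 1) ψ := ⟨hψ.continuous, hψc⟩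
  have hsup : ∀ y, 1 ≤ ‖y‖ → ψ y = 0 := fun y hy =>
    image_eq_zero_of_notMem_tsupport fun h => by
      have := hψsupp h
      rw [mem_ball_zero_iff] at this
      linarith
  obtain ⟨Λ, hΛ⟩ := ContDiff.lipschitzWith_of_hasCompactSupport hψc hψ1 one_ne_zero
  have hΛ' : ∀ x y, |ψ x - ψ y| ≤ (Λ : ℝ) * ‖x - y‖ := fun x y => by
    have := hΛ.dist_le_mul x y
    rwa [Real.dist_eq, dist_eq_norm] at this
  obtain ⟨E, hE, hpt⟩ := hardy_pointwise m p q hp0 hp2 hq0 hq1 hqn Ω hΩ ψ hψC hψint hsup Λ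
    Λ.2 hΛ'
  obtain ⟨C, hC, hl⟩ := hl_strong (m + 1) (Nat.succ_ne_zero m) (p / q)
    (by rwa [one_lt_div hq0])
  refine ⟨E * C, ENNReal.mul_ne_top hE hC, ?_⟩
  intro u hu huc hus
  have hu1 : ContDiff ℝ 1 u := hu.of_le (by norm_cast)
  have hG : ∀ j, ∃ G : EuclideanSpace ℝ (Fin (m + 1)) → ℝ≥0∞, Measurable G ∧
      (∀ x, hlMax (m + 1) (fun y => convMax (m + 1) ψ u j y ^ q) x ^ (p / q) ≤ G x) ∧
      ∫⁻ x, G x ≤ C * ∫⁻ x, convMax (m + 1) ψ u j x ^ p := by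
    intro j
    obtain ⟨G, hGm, hGle, hGi⟩ := hl (fun y => convMax (m + 1) ψ u j y ^ q)
      ((convMax_meas (m + 1) ψ u hψC hu1 huc j).pow_const q)
    refine ⟨G, hGm, hGle, hGi.trans (le_of_eq ?_)⟩
    congr 1
    refine lintegral_congr fun x => ?_
    rw [← ENNReal.rpow_mul, mul_div_cancel₀ _ hq0.ne']
  choose G hGm hGle hGi using hG
  calc ∫⁻ x in Ω, ENNReal.ofReal (|u x| / infDist x (frontier Ω)) ^ p
      ≤ ∫⁻ x in Ω, ∑ j, E * G j x := by
        refine setLIntegral_mono' hΩ.1.measurableSet fun x hx => ?_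
        refine (hpt u hu1 huc hus x hx).trans (Finset.sum_le_sum fun j _ => ?_)
        exact mul_le_mul_right (hGle j x) _
    _ ≤ ∫⁻ x, ∑ j, E * G j x := setLIntegral_le_lintegral _ _
    _ = ∑ j, E * ∫⁻ x, G j x := by
        rw [lintegral_finsetSum _ fun j _ => (hGm j).const_mul E]
        exact Finset.sum_congr rfl fun j _ => lintegral_const_mul E (hGm j)
    _ ≤ ∑ j, E * (C * ∫⁻ x, convMax (m + 1) ψ u j x ^ p) :=
        Finset.sum_le_sum fun j _ => mul_le_mul_right (hGi j) _
    _ = _ := by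
        rw [Finset.mul_sum]
        exact Finset.sum_congr rfl fun j _ => (mul_assoc _ _ _).symm
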